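/- Let f : ℝ^n → ℝ be L-smooth and convex, let 0 < t ≤ 1/L, and let x⁺ = x - t∇f(x) be one gradient descent step from x ∈ ℝ^n. Then f(x) ≥ f(x⁺) + (t/2)‖∇f(x)‖² + (t/2)‖∇f(x⁺)‖². -/

import Mathlib

/-!
Write `g = ∇f(x)` and `g⁺ = ∇f(x⁺)`. The auxiliary point `z = x - t (g - g⁺) = x⁺ + t g⁺` compares
`f x` with `f x⁺`: convexity bounds `f z` from below by the tangent plane at `x⁺`
(`tangent_le_of_convexOn`), and smoothness bounds it from above by the quadratic model at `x`
(`le_quadratic_of_smooth`). Since `L t ≤ 1`, the two bounds combine to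
`f x⁺ + t ‖g⁺‖² ≤ f x - t ⟪g, g - g⁺⟫ + (t / 2) ‖g - g⁺‖²`, and expanding the square gives the claim.
-/

/-- The derivative of `f` along the line `s ↦ x + s • d`. -/
lemma hasDerivAt_line {E : Type*} [NormedAddCommGroup E] [InnerProductSpace ℝ E] [CompleteSpace E]
    {f : E → ℝ} (hf : Differentiable ℝ f) (x d : E) (s : ℝ) :
    HasDerivAt (fun s : ℝ => f (x + s • d)) (inner ℝ (gradient f (x + s • d)) d) s := by
  have h1 : HasDerivAt (fun s : ℝ => x + s • d) d s := by
    simpa using ((hasDerivAt_id s).smul_const d).const_add x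
  have h2 := (hf (x + s • d)).hasGradientAt.hasFDerivAt
  exact h2.comp_hasDerivAt s h1

lemma tangent_le_of_convexOn {E : Type*} [NormedAddCommGroup E] [InnerProductSpace ℝ E]
    [CompleteSpace E] {f : E → ℝ} (hf : Differentiable ℝ f) (hconv : ConvexOn ℝ Set.univ f)
    (x d : E) : f x + inner ℝ (gradient f x) d ≤ f (x + d) := by
  have hc : ConvexOn ℝ Set.univ (fun s : ℝ => f (x + s • d)) := by
    refine ⟨convex_univ, fun a _ b _ p q hp hq hpq => ?_⟩
    have h := hconv.2 (Set.mem_univ (x + a • d)) (Set.mem_univ (x + b • d)) hp hq hpq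
    have e : x + (p • a + q • b) • d = p • (x + a • d) + q • (x + b • d) := by
      have hx : x = p • x + q • x := by rw [← add_smul, hpq, one_smul]
      nth_rewrite 1 [hx]
      simp only [smul_eq_mul]
      module
    simpa only [e] using h
  have h := hc.le_slope_of_hasDerivAt (Set.mem_univ 0) (Set.mem_univ 1) one_pos
    (hasDerivAt_line hf x d 0)
  simp only [slope_def_field, zero_smul, one_smul, add_zero, sub_zero, div_one] at h
  linarith

/-- The descent lemma: an `L`-smooth function lies below its quadratic model. -/
lemma le_quadratic_of_smooth {E : Type*} [NormedAddCommGroup E] [InnerProductSpace ℝ E]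
    [CompleteSpace E] {f : E → ℝ} {L : ℝ} (hf : Differentiable ℝ f)
    (hsmooth : ∀ x y, ‖gradient f x - gradient f y‖ ≤ L * ‖x - y‖) (x d : E) :
    f (x + d) ≤ f x + inner ℝ (gradient f x) d + L / 2 * ‖d‖ ^ 2 := by
  have hd : ∀ s : ℝ, HasDerivAt
      (fun s : ℝ => f (x + s • d) - (s * inner ℝ (gradient f x) d + s ^ 2 * (L / 2 * ‖d‖ ^ 2)))
      (inner ℝ (gradient f (x + s • d)) d
        - (inner ℝ (gradient f x) d + 2 * s * (L / 2 * ‖d‖ ^ 2))) s := by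
    intro s
    have h1 := (hasDerivAt_id s).mul_const (inner ℝ (gradient f x) d)
    have h2 := (hasDerivAt_pow 2 s).mul_const (L / 2 * ‖d‖ ^ 2)
    exact ((hasDerivAt_line hf x d s).sub (h1.add h2)).congr_deriv (by push_cast; ring)
  have hanti := antitoneOn_of_deriv_nonpos (convex_Ici (0 : ℝ))
    (fun s _ => (hd s).continuousAt.continuousWithinAt)
    (fun s _ => (hd s).differentiableAt.differentiableWithinAt) (by
      intro s hs
      rw [interior_Ici, Set.mem_Ioi] at hs
      rw [(hd s).deriv]
      have h1 := real_inner_le_norm (gradient f (x + s • d) - gradient f x) d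
      rw [inner_sub_left] at h1
      have h2 := hsmooth (x + s • d) x
      rw [add_sub_cancel_left, norm_smul, Real.norm_of_nonneg hs.le] at h2
      have h3 := mul_le_mul_of_nonneg_right h2 (norm_nonneg d)
      nlinarith)
  have h := hanti (Set.mem_Ici.2 le_rfl) (Set.mem_Ici.2 zero_le_one) zero_le_one
  simp only [zero_smul, one_smul, add_zero] at h
  linarith

/-- refined descent lemma for gradient descent on an `L`-smooth
convex function with step size `0 < t ≤ 1/L`. -/
theorem refined_descent_gradient {n : ℕ}
    (f : EuclideanSpace ℝ (Fin n) → ℝ)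
    (L t : ℝ) (hL : 0 < L) (ht : 0 < t) (htL : t ≤ 1 / L)
    (hf : Differentiable ℝ f)
    (hsmooth : ∀ x y, ‖gradient f x - gradient f y‖ ≤ L * ‖x - y‖)
    (hconv : ConvexOn ℝ Set.univ f)
    (x xp : EuclideanSpace ℝ (Fin n))
    (hxp : xp = x - t • gradient f x) :
    f xp + t / 2 * ‖gradient f x‖ ^ 2 + t / 2 * ‖gradient f xp‖ ^ 2 ≤ f x := by
  have hz : x + (-t) • (gradient f x - gradient f xp) = xp + t • gradient f xp := by
    nth_rewrite 2 [hxp]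
    module
  have hlow := tangent_le_of_convexOn hf hconv xp (t • gradient f xp)
  have hup := le_quadratic_of_smooth hf hsmooth x ((-t) • (gradient f x - gradient f xp))
  rw [hz] at hup
  rw [inner_smul_right, real_inner_self_eq_norm_sq] at hlow
  rw [inner_smul_right, inner_sub_right, real_inner_self_eq_norm_sq, norm_smul, mul_pow,
    norm_neg, Real.norm_of_nonneg ht.le] at hup
  have hLt : L * t ≤ 1 := by
    rw [le_div_iff₀ hL] at htL
    linarith
  have hq : L / 2 * (t ^ 2 * ‖gradient f x - gradient f xp‖ ^ 2)
      ≤ t / 2 * ‖gradient f x - gradient f xp‖ ^ 2 := by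
    have h := mul_le_mul_of_nonneg_right hLt
      (by positivity : 0 ≤ t / 2 * ‖gradient f x - gradient f xp‖ ^ 2)
    linarith
  have hexp := norm_sub_sq_real (gradient f x) (gradient f xp)
  rw [hexp] at hq hup
  linarith
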